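/- Let G be a multigraph and let k ≥ 0 be an integer. Suppose that every vertex of G is joined by double edges to at most k other vertices, and that the number of unordered pairs {u,v} of distinct vertices joined by at least two parallel edges is greater than k². Then G has no feedback vertex set of size at most k, i.e., fvs(G) > k. -/

import Mathlib

/-- A multigraph on vertex type `V` with edge type `E`: each edge has an
unordered pair of endpoints.  Parallel edges are distinguished (they are
different elements of `E`), and self-loops are edges whose endpoint pair is
diagonal. -/
structure Multigraph (V : Type) (E : Type) where
  ends : E → Sym2 V

namespace Multigraph

variable {V E : Type}

/-- A multigraph has no self-loops. -/
def LoopFree (G : Multigraph V E) : Prop := ∀ e : E, ¬ (G.ends e).IsDiag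

/-- The degree of a vertex: the number of incident edges (parallel edges
counted with multiplicity). -/
noncomputable def degree (G : Multigraph V E) (v : V) : ℕ :=
  Nat.card {e : E // v ∈ G.ends e}

/-- A walk `(v₀, e₁, v₁, …, e_l, v_l)` of positive length `l ≥ 1` in which
each edge `eᵢ` joins `v_{i-1}` and `vᵢ`. -/
structure Walk (G : Multigraph V E) where
  len : ℕ
  len_pos : 0 < len
  verts : Fin (len + 1) → V
  edges : Fin len → E
  valid : ∀ i : Fin len, G.ends (edges i) = s(verts i.castSucc, verts i.succ)

namespace Walk

variable {G : Multigraph V E}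

/-- The first vertex of a walk. -/
def start (W : G.Walk) : V := W.verts 0

/-- The last vertex of a walk. -/
def finish (W : G.Walk) : V := W.verts (Fin.last W.len)

/-- A cycle: a closed walk of positive length with pairwise distinct edges and
pairwise distinct vertices (except that the first and last vertex coincide). -/
def IsCycle (W : G.Walk) : Prop :=
  W.start = W.finish ∧ Function.Injective W.edges ∧
    Function.Injective fun i : Fin W.len => W.verts i.castSucc

/-- An `s`-cycle: a walk with `v₀ = v_l = s`, with `vᵢ ≠ s` for `0 < i < l`,
with no U-turns (`eᵢ ≠ e_{i+1}`), and in which every edge occurs at most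
twice. -/
def IsSCycle (W : G.Walk) (s : V) : Prop :=
  W.start = s ∧ W.finish = s ∧
  (∀ i : Fin (W.len + 1), i ≠ 0 → i ≠ Fin.last W.len → W.verts i ≠ s) ∧
  (∀ i j : Fin W.len, (i : ℕ) + 1 = (j : ℕ) → W.edges i ≠ W.edges j) ∧
  (∀ e : E, Nat.card {i : Fin W.len // W.edges i = e} ≤ 2)

/-- The multiplicity of a vertex `v` in the multiset `V(W)` of vertices of a
walk `W`. -/
noncomputable def vertCount (W : G.Walk) (v : V) : ℕ :=
  Nat.card {i : Fin (W.len + 1) // W.verts i = v}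

end Walk

/-- `S` is a feedback vertex set: every cycle of `G` meets `S`
(equivalently, `G − S` contains no cycle). -/
def IsFVS (G : Multigraph V E) (S : Set V) : Prop :=
  ∀ W : G.Walk, W.IsCycle → ∃ i, W.verts i ∈ S

/-- The minimum size of a feedback vertex set. -/
noncomputable def fvs [Fintype V] (G : Multigraph V E) : ℕ :=
  sInf {n : ℕ | ∃ S : Set V, G.IsFVS S ∧ S.ncard = n}

/-- `x : V → ℝ≥0` is an `s`-cycle cover: `x s = 0` and every `s`-cycle `C`
satisfies `x(V(C)) ≥ 1` (vertices counted with multiplicity). -/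
def IsSCycleCover (G : Multigraph V E) (s : V) (x : V → ℝ) : Prop :=
  (∀ v, 0 ≤ x v) ∧ x s = 0 ∧
    ∀ W : G.Walk, W.IsSCycle s → 1 ≤ ∑ i, x (W.verts i)

/-- A function is half-integral if it takes values in `{0, 1/2, 1}`. -/
def HalfIntegral (x : V → ℝ) : Prop := ∀ v, x v = 0 ∨ x v = 1/2 ∨ x v = 1

/-- A minimum `s`-cycle cover. -/
def IsMinSCycleCover [Fintype V] (G : Multigraph V E) (s : V) (x : V → ℝ) : Prop :=
  G.IsSCycleCover s x ∧ ∀ x' : V → ℝ, G.IsSCycleCover s x' → ∑ v, x v ≤ ∑ v, x' v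

/-- An `s`-cycle packing: a nonnegative, finitely supported weighting of the
`s`-cycles such that every vertex `v ≠ s` is used (with multiplicity) with
total weight at most `1`. -/
def IsSCyclePacking (G : Multigraph V E) (s : V) (y : G.Walk →₀ ℝ) : Prop :=
  (∀ W, 0 ≤ y W) ∧ (∀ W, y W ≠ 0 → W.IsSCycle s) ∧
    ∀ v : V, v ≠ s → ∑ W ∈ y.support, (W.vertCount v : ℝ) * y W ≤ 1

/-- The size of an `s`-cycle packing. -/
noncomputable def packingSize {G : Multigraph V E} (y : G.Walk →₀ ℝ) : ℝ :=
  ∑ W ∈ y.support, y W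

/-- Number of edges incident to `v` with `f`-value 1. -/
noncomputable def cnt1 (G : Multigraph V E) (f : E → ℝ) (v : V) : ℕ :=
  Nat.card {e : E // v ∈ G.ends e ∧ f e = 1}

/-- Number of edges incident to `v` with `f`-value 1/2. -/
noncomputable def cntH (G : Multigraph V E) (f : E → ℝ) (v : V) : ℕ :=
  Nat.card {e : E // v ∈ G.ends e ∧ f e = 1/2}

/-- type-O: all incident edges have `f`-value 0. -/
def IsTypeO (G : Multigraph V E) (f : E → ℝ) (v : V) : Prop :=
  ∀ e : E, v ∈ G.ends e → f e = 0

/-- type-I: exactly two incident edges have value 1 and none has value 1/2. -/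
def IsTypeI (G : Multigraph V E) (f : E → ℝ) (v : V) : Prop :=
  G.cnt1 f v = 2 ∧ G.cntH f v = 0

/-- type-H: no incident edge has value 1 and exactly two have value 1/2. -/
def IsTypeH (G : Multigraph V E) (f : E → ℝ) (v : V) : Prop :=
  G.cnt1 f v = 0 ∧ G.cntH f v = 2

/-- type-T: exactly one incident edge has value 1 and exactly two have value 1/2. -/
def IsTypeT (G : Multigraph V E) (f : E → ℝ) (v : V) : Prop :=
  G.cnt1 f v = 1 ∧ G.cntH f v = 2

/-- A basic `s`-cycle packing: `f : E → {0,1/2,1}` with `f(e) ∈ {0,1}` on edges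
incident to `s`, every vertex `v ≠ s` of one of the four types O, I, H, T, and
every cycle consisting of edges of value 1/2 (i.e. every half-integral cycle)
containing an odd number of type-T vertices. -/
def IsBasicSCyclePacking (G : Multigraph V E) (s : V) (f : E → ℝ) : Prop :=
  (∀ e : E, f e = 0 ∨ f e = 1/2 ∨ f e = 1) ∧
  (∀ e : E, s ∈ G.ends e → f e = 0 ∨ f e = 1) ∧
  (∀ v : V, v ≠ s →
    G.IsTypeO f v ∨ G.IsTypeI f v ∨ G.IsTypeH f v ∨ G.IsTypeT f v) ∧
  (∀ W : G.Walk, W.IsCycle → (∀ j, f (W.edges j) = 1/2) →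
    Odd (Nat.card {i : Fin W.len // G.IsTypeT f (W.verts i.castSucc)}))

/-- The size of a basic `s`-cycle packing: `(1/2) · Σ_{e ∈ δ(s)} f(e)`. -/
noncomputable def basicSize [Fintype E] (G : Multigraph V E) (s : V) (f : E → ℝ) : ℝ :=
  (1/2) * ∑ e : E, Set.indicator {e' : E | s ∈ G.ends e'} f e

/-- `u` and `v` are connected by a walk avoiding the vertex set `S` and the
edge set `F` (or `u = v`). -/
def Reach (G : Multigraph V E) (S : Set V) (F : Set E) (u v : V) : Prop :=
  u = v ∨ ∃ W : G.Walk, (∀ i, W.verts i ∉ S) ∧ (∀ j, W.edges j ∉ F) ∧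
    W.start = u ∧ W.finish = v

/-- The edge `e` belongs to the set `B` of the `s`-cycle cover reduction with
respect to the set `X`: `e` joins `s` to some `u ∉ X`, `e` is a bridge of
`G − X` (its endpoints are disconnected in `G − X − e`), and the connected
component of `u` in `G − X − s` is a tree (no cycle of `G − X − s` passes
through a vertex reachable from `u` in `G − X − s`). -/
def InB (G : Multigraph V E) (s : V) (X : Set V) (e : E) : Prop :=
  ∃ u : V, G.ends e = s(s, u) ∧ u ≠ s ∧ u ∉ X ∧ s ∉ X ∧
    ¬ G.Reach X {e} s u ∧
    ¬ ∃ W : G.Walk, W.IsCycle ∧ (∀ i, W.verts i ∉ X ∪ {s}) ∧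
        G.Reach (X ∪ {s}) ∅ u W.start

/-- The graph `G' = (V, E')` obtained from `G` by the `s`-cycle cover
reduction with respect to a half-integral `s`-cycle cover `x`: with
`X = x⁻¹(1)`, insert a double edge (two new parallel edges) between `s` and
each `v ∈ X`, and delete the edges of `B`. -/
def reduced (G : Multigraph V E) (s : V) (x : V → ℝ) :
    Multigraph V ({e : E // ¬ G.InB s {v : V | x v = 1} e} ⊕ ({v : V // x v = 1} × Bool)) where
  ends := fun e =>
    match e with
    | .inl e' => G.ends e'.val
    | .inr p => s(s, p.1.val)

/-- The graph `G − s` obtained by deleting the vertex `s` and all incident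
edges (the vertex `s` is kept as an isolated vertex). -/
def deleteVertex (G : Multigraph V E) (s : V) :
    Multigraph V {e : E // s ∉ G.ends e} where
  ends := fun e => G.ends e.val

/-- An `f`-augmenting walk for a basic `s`-cycle packing `f`:
(1) it starts at `s`; (2) its first edge has value 0; (3) its edges are
pairwise distinct; (4) its vertices `v₀,…,v_{l-1}` are pairwise distinct;
(5) each interior vertex `vᵢ` (`1 ≤ i ≤ l-1`) is type-O, or type-I with
`f(e) = 1` for at least one of `e ∈ {eᵢ, e_{i+1}}`; (6) if the last vertex
`v_l` equals `vᵢ` for some `i < l` then: `v_l = s` and `f(e_l) = 0`, or `v_l`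
is type-O, or `v_l` is type-I and `f(e) = 1` for at least one of
`e ∈ {eᵢ, e_l}`; (7) if `v_l` is a new vertex then it is type-H or type-T. -/
def IsAugmentingWalk (G : Multigraph V E) (s : V) (f : E → ℝ) (W : G.Walk) : Prop :=
  W.start = s ∧
  f (W.edges ⟨0, W.len_pos⟩) = 0 ∧
  Function.Injective W.edges ∧
  Function.Injective (fun i : Fin W.len => W.verts i.castSucc) ∧
  (∀ i : Fin W.len, 0 < i.val →
    (G.IsTypeO f (W.verts i.castSucc) ∨
      (G.IsTypeI f (W.verts i.castSucc) ∧
        (f (W.edges ⟨i.val - 1, Nat.lt_of_le_of_lt (Nat.sub_le _ _) i.isLt⟩) = 1 ∨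
          f (W.edges i) = 1)))) ∧
  (∀ i : Fin W.len, W.finish = W.verts i.castSucc →
    ((W.finish = s ∧ f (W.edges ⟨W.len - 1, Nat.sub_lt W.len_pos Nat.one_pos⟩) = 0) ∨
     (W.finish ≠ s ∧ G.IsTypeO f W.finish) ∨
     (W.finish ≠ s ∧ G.IsTypeI f W.finish ∧
       (f (W.edges ⟨i.val - 1, Nat.lt_of_le_of_lt (Nat.sub_le _ _) i.isLt⟩) = 1 ∨
         f (W.edges ⟨W.len - 1, Nat.sub_lt W.len_pos Nat.one_pos⟩) = 1)))) ∧
  ((∀ i : Fin W.len, W.finish ≠ W.verts i.castSucc) →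
    (G.IsTypeH f W.finish ∨ G.IsTypeT f W.finish))

/-- `g = f_W` is obtained from `f` by augmenting along the walk `W`.
If `v_l = s` (so `h = l`), the values of `f` on `e₁,…,e_l` are flipped
(`f ↦ 1 − f`).  If `v_l ≠ s` equals an earlier vertex `vᵢ` (so `h = i`), the
values on `e₁,…,e_h` are flipped and the values on `e_{h+1},…,e_l` are set to
`1/2`.  If `v_l ≠ s` is a new vertex (type-H or type-T, with `h = l`), the
values on `e₁,…,e_l` are flipped and, on the half-integral cycle `C` of `v_l`
(traversed from `t₀ = v_l` in either direction), the edges of the segment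
`Pᵢ` between consecutive markers `tᵢ, t_{i+1}` (the markers being `v_l`
together with the type-T vertices of `C`) receive value `0` for even `i` and
`1` for odd `i`; the segment index of an edge is the number of type-T
vertices strictly preceding it along the traversal.  All other edges keep
their `f`-value. -/
def AugmentedAlong (G : Multigraph V E) (s : V) (f : E → ℝ) (W : G.Walk) (g : E → ℝ) : Prop :=
  -- Case A : the walk returns to `s`.
  (W.finish = s ∧
    (∀ j : Fin W.len, g (W.edges j) = 1 - f (W.edges j)) ∧
    (∀ e : E, (∀ j, e ≠ W.edges j) → g e = f e)) ∨
  -- Case B : the last vertex is a repeated vertex `vᵢ ≠ s` (type-O or type-I).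
  (W.finish ≠ s ∧
    (∃ i : Fin W.len, W.finish = W.verts i.castSucc ∧
      (∀ j : Fin W.len, j.val < i.val → g (W.edges j) = 1 - f (W.edges j)) ∧
      (∀ j : Fin W.len, i.val ≤ j.val → g (W.edges j) = 1/2) ∧
      (∀ e : E, (∀ j, e ≠ W.edges j) → g e = f e))) ∨
  -- Case C : the last vertex is a new vertex of type-H or type-T.
  (W.finish ≠ s ∧ (∀ i : Fin W.len, W.finish ≠ W.verts i.castSucc) ∧
    (∃ C : G.Walk, C.IsCycle ∧ C.verts 0 = W.finish ∧
      (∀ j, f (C.edges j) = 1/2) ∧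
      (∀ j : Fin W.len, g (W.edges j) = 1 - f (W.edges j)) ∧
      (∀ j : Fin C.len,
        g (C.edges j) =
          if Even (Nat.card {m : Fin C.len //
              1 ≤ m.val ∧ m.val ≤ j.val ∧ G.IsTypeT f (C.verts m.castSucc)})
          then 0 else 1) ∧
      (∀ e : E, (∀ j, e ≠ W.edges j) → (∀ j, e ≠ C.edges j) → g e = f e)))


end Multigraph

/-!
The two parallel edges of a double edge form a cycle, so a feedback vertex set is a vertex cover
of the simple graph of double edges. When that graph has maximum degree at most `k`, a vertex cover
of size at most `k` covers at most `k ^ 2` edges.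
-/

theorem encard_biUnion_le_encard_mul {ι α : Type*} {s : Set ι} {t : ι → Set α} {k : ℕ∞}
    (ht : ∀ i ∈ s, (t i).encard ≤ k) : (⋃ i ∈ s, t i).encard ≤ s.encard * k := by
  rcases s.finite_or_infinite with hs | hs
  · lift s to Finset ι using hs
    calc (⋃ i ∈ s, t i).encard ≤ ∑ i ∈ s, (t i).encard := s.set_encard_biUnion_le t
      _ ≤ s.card • k := s.sum_le_card_nsmul _ k ht
      _ = (s : Set ι).encard * k := by rw [Set.encard_coe_eq_coe_finsetCard, nsmul_eq_mul]
  · rcases eq_or_ne k 0 with rfl | hk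
    · have h_empty : ∀ i ∈ s, t i = ∅ := by simpa using ht
      simpa using h_empty
    · rw [hs.encard_eq, ENat.top_mul hk]
      exact le_top

theorem encard_incidenceSet {V : Type*} (G : SimpleGraph V) (v : V) :
    (G.incidenceSet v).encard = (G.neighborSet v).encard := by
  classical exact ENat.card_congr (G.incidenceSetEquivNeighborSet v)

theorem edgeSet_subset_biUnion_incidenceSet {V : Type*} {G : SimpleGraph V} {C : Set V}
    (hC : G.IsVertexCover C) : G.edgeSet ⊆ ⋃ v ∈ C, G.incidenceSet v := by
  intro e he
  induction e with | _ u v =>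
  rcases hC he with hu | hv
  · exact Set.mem_biUnion hu (G.mk'_mem_incidenceSet_left_iff.mpr he)
  · exact Set.mem_biUnion hv (G.mk'_mem_incidenceSet_right_iff.mpr he)

theorem encard_edgeSet_le_of_isVertexCover {V : Type*} {G : SimpleGraph V} {C : Set V} {k : ℕ∞}
    (hC : G.IsVertexCover C) (hdeg : ∀ v ∈ C, (G.neighborSet v).encard ≤ k) :
    G.edgeSet.encard ≤ C.encard * k :=
  (Set.encard_le_encard (edgeSet_subset_biUnion_incidenceSet hC)).trans <|
    encard_biUnion_le_encard_mul fun v hv => (encard_incidenceSet G v).trans_le (hdeg v hv)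

namespace Multigraph

variable {V E : Type} {G : Multigraph V E}

/-- The simple graph of double edges of `G`: distinct vertices `u` and `v` are adjacent when at
least two edges of `G` join them. Being `Set.Nontrivial` rather than having a cardinality at least
two, it also counts infinite classes of parallel edges. -/
def doubleEdgeGraph (G : Multigraph V E) : SimpleGraph V :=
  .fromEdgeSet {p | {e | G.ends e = p}.Nontrivial}

/-- The closed walk of length two that goes from `u` to `v` along `a` and returns along `b`, used as
a cycle that a feedback vertex set has to meet. -/
def digon {u v : V} {a b : E} (ha : G.ends a = s(u, v)) (hb : G.ends b = s(u, v)) : G.Walk where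
  len := 2
  len_pos := two_pos
  verts := ![u, v, u]
  edges := ![a, b]
  valid := Fin.forall_fin_two.mpr ⟨ha, hb.trans Sym2.eq_swap⟩

theorem isCycle_digon {u v : V} {a b : E} (ha : G.ends a = s(u, v)) (hb : G.ends b = s(u, v))
    (huv : u ≠ v) (hab : a ≠ b) : (digon ha hb).IsCycle := by
  have h_verts : (fun i : Fin 2 => (digon ha hb).verts i.castSucc) = ![u, v] :=
    funext (Fin.forall_fin_two.mpr ⟨rfl, rfl⟩)
  exact ⟨rfl, injective_pair_iff_ne.mpr hab, h_verts ▸ injective_pair_iff_ne.mpr huv⟩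

theorem IsFVS.isVertexCover_doubleEdgeGraph {S : Set V} (hS : G.IsFVS S) :
    G.doubleEdgeGraph.IsVertexCover S := by
  rintro u v ⟨⟨a, ha, b, hb, hab⟩, huv⟩
  obtain ⟨i, hi⟩ := hS (digon ha hb) (isCycle_digon ha hb huv hab)
  change Fin 3 at i
  fin_cases i
  exacts [.inl hi, .inr hi, .inl hi]

theorem nontrivial_setOf_ends_eq_iff [Finite E] {p : Sym2 V} :
    {e | G.ends e = p}.Nontrivial ↔ 2 ≤ Nat.card {e : E // G.ends e = p} :=
  Set.nontrivial_coe_sort.symm.trans Finite.one_lt_card_iff_nontrivial.symm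

theorem encard_neighborSet_doubleEdgeGraph [Finite V] [Finite E] (G : Multigraph V E) (v : V) :
    (G.doubleEdgeGraph.neighborSet v).encard =
      Nat.card {u : V // u ≠ v ∧ 2 ≤ Nat.card {e : E // G.ends e = s(u, v)}} := by
  rw [← Set.coe_ofPred, Nat.card_coe_set_eq, Set.coe_ncard_eq_encard]
  congr 1
  ext u
  rw [SimpleGraph.mem_neighborSet, SimpleGraph.adj_comm, doubleEdgeGraph,
    SimpleGraph.fromEdgeSet_adj, Set.mem_ofPred_eq, nontrivial_setOf_ends_eq_iff]
  exact and_comm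

theorem encard_edgeSet_doubleEdgeGraph [Finite V] [Finite E] (G : Multigraph V E) :
    G.doubleEdgeGraph.edgeSet.encard =
      Nat.card {p : Sym2 V // ¬ p.IsDiag ∧ 2 ≤ Nat.card {e : E // G.ends e = p}} := by
  rw [← Set.coe_ofPred, Nat.card_coe_set_eq, Set.coe_ncard_eq_encard]
  congr 1
  ext p
  rw [doubleEdgeGraph, SimpleGraph.edgeSet_fromEdgeSet, Set.mem_sdiff, Set.mem_ofPred_eq,
    nontrivial_setOf_ends_eq_iff]
  exact and_comm

end Multigraph

theorem stmt16_no_small_fvs_of_many_doubles_general {V E : Type} {G : Multigraph V E} {k : ℕ∞}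
    (hdeg : ∀ v, (G.doubleEdgeGraph.neighborSet v).encard ≤ k)
    (hmany : k ^ 2 < G.doubleEdgeGraph.edgeSet.encard) {S : Set V} (hS : G.IsFVS S) :
    k < S.encard := by
  by_contra! hcard
  refine hmany.not_ge ?_
  calc G.doubleEdgeGraph.edgeSet.encard
      ≤ S.encard * k :=
        encard_edgeSet_le_of_isVertexCover hS.isVertexCover_doubleEdgeGraph fun v _ => hdeg v
    _ ≤ k * k := by gcongr
    _ = k ^ 2 := (sq k).symm

/-- if every vertex is joined by double edges to at most `k`
other vertices while more than `k²` unordered pairs of distinct vertices are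
joined by double edges, then there is no feedback vertex set of size at
most `k`. -/
theorem stmt16_no_small_fvs_of_many_doubles {V E : Type} [Fintype V] [Fintype E]
    (G : Multigraph V E) (k : ℕ)
    (hdeg : ∀ v : V,
      Nat.card {u : V // u ≠ v ∧ 2 ≤ Nat.card {e : E // G.ends e = s(u, v)}} ≤ k)
    (hmany : k ^ 2 <
      Nat.card {p : Sym2 V // ¬ p.IsDiag ∧ 2 ≤ Nat.card {e : E // G.ends e = p}}) :
    ¬ ∃ S : Set V, G.IsFVS S ∧ S.ncard ≤ k := by
  rintro ⟨S, hS, hcard⟩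
  refine (stmt16_no_small_fvs_of_many_doubles_general (k := k) (fun v => ?_) ?_ hS).not_ge ?_
  · exact (G.encard_neighborSet_doubleEdgeGraph v).trans_le (mod_cast hdeg v)
  · exact lt_of_lt_of_eq (mod_cast hmany) G.encard_edgeSet_doubleEdgeGraph.symm
  · exact Set.coe_ncard_eq_encard S ▸ Nat.cast_le.mpr hcard
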